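/- Fix integers d ≥ 2, q with 1 ≤ q ≤ d-1, γ with 0 ≤ γ ≤ q-1, and reals u > 0 and δ > 0. Then lim_{K↑0} F_{K,u}(δ) = (D(d,q,γ)·ω_{d-γ}·(q-γ)/(ω_{q-γ}·u^{q-γ})) · ∫_0^δ r^{q-γ-1} · ∫_0^{min(1, u/r)} z^q·(1-z²)^{(d-q)/2-1} dz dr, i.e. the hyperbolic distribution function of the distance of E∩L to the origin converges pointwise, as the curvature tends to 0, to the Euclidean one. -/

import Mathlib

open Real MeasureTheory Filter Asymptotics

/-- Surface area `ω_n = 2 π^{n/2} / Γ(n/2)` of the Euclidean unit sphere in `ℝ^n`. -/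
noncomputable def omegaS (n : ℕ) : ℝ := 2 * Real.pi ^ ((n : ℝ) / 2) / Real.Gamma ((n : ℝ) / 2)

/-- The constant `D(d,q,γ)`. -/
noncomputable def Dconst (d q γ : ℕ) : ℝ :=
  omegaS (γ + 1) * omegaS (q - γ) * omegaS (d - q) / (omegaS (d - q + γ + 1) * omegaS (d - γ))

/-- `R_K(x)`, the Euclidean (Beltrami–Klein) radius of a hyperbolic ball of radius `x`. -/
noncomputable def RK (K x : ℝ) : ℝ :=
  Real.sinh (Real.sqrt (-K) * x) /
    (Real.sqrt (-K) * Real.sqrt (1 + Real.sinh (Real.sqrt (-K) * x) ^ 2))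

/-- `C_K(d,m,u)`, the invariant measure of the `m`-flats meeting the ball of radius `u`. -/
noncomputable def Cconst (K : ℝ) (d m : ℕ) (u : ℝ) : ℝ :=
  omegaS (d - m) * Real.sqrt (-K) ^ (-(d : ℝ) + (m : ℝ) + 1) *
    ∫ r in (0:ℝ)..u,
      Real.cosh (Real.sqrt (-K) * r) ^ m * Real.sinh (Real.sqrt (-K) * r) ^ (d - m - 1)

/-- `P(d,q,γ,K,u)`, the hyperbolic intersection probability of the random flats `E` and `L`. -/
noncomputable def Pprob (d q γ : ℕ) (K u : ℝ) : ℝ :=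
  Dconst d q γ * omegaS (d - γ) / Cconst K d (d - q + γ) u *
    ∫ r in (0:ℝ)..(1 / Real.sqrt (-K)),
      r ^ ((q : ℝ) - (γ : ℝ) - 1) *
        ∫ z in (0:ℝ)..(min 1 (RK K u / r)),
          z ^ q * (1 - z ^ 2) ^ (((d : ℝ) - (q : ℝ)) / 2 - 1) *
            (1 + K * r ^ 2 * z ^ 2) ^ (-((d : ℝ) + 1) / 2)

/-- `F_{K,u}(δ)`, the distribution function of the distance of `E ∩ L` to the origin. -/
noncomputable def Fdist (d q γ : ℕ) (K u δ : ℝ) : ℝ :=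
  Dconst d q γ * omegaS (d - γ) / Cconst K d (d - q + γ) u *
    ∫ r in (0:ℝ)..(RK K δ),
      r ^ ((q : ℝ) - (γ : ℝ) - 1) *
        ∫ z in (0:ℝ)..(min 1 (RK K u / r)),
          z ^ q * (1 - z ^ 2) ^ (((d : ℝ) - (q : ℝ)) / 2 - 1) *
            (1 + K * r ^ 2 * z ^ 2) ^ (-((d : ℝ) + 1) / 2)

/-- `f_{d,q,γ,K}(δ)`, the density of the distance of `E ∩ L` to the origin. -/
noncomputable def fdens (d q γ : ℕ) (K u δ : ℝ) : ℝ :=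
  Dconst d q γ * omegaS (d - γ) / Cconst K d (d - q + γ) u *
    (RK K δ ^ ((q : ℝ) - (γ : ℝ) - 1) / Real.cosh (Real.sqrt (-K) * δ) ^ 2) *
    ∫ z in (0:ℝ)..(min 1 (RK K u / RK K δ)),
      z ^ q * (1 - z ^ 2) ^ (((d : ℝ) - (q : ℝ)) / 2 - 1) *
        (1 + K * RK K δ ^ 2 * z ^ 2) ^ (-((d : ℝ) + 1) / 2)

/-- The limiting constant `ρ(u,q,γ,κ)` in the critical phase. -/
noncomputable def rhoConst (u : ℝ) (q γ : ℕ) (κ : ℝ) : ℝ :=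
  omegaS (γ + 1) * (2 * Real.pi) ^ (-((γ : ℝ) + 1) / 2) * u ^ (q + 1) *
    κ ^ (((γ : ℝ) + 1) / 2) *
    (∫ s in (0:ℝ)..u, Real.exp (κ * s ^ 2 / 2) * s ^ ((q : ℝ) - (γ : ℝ) - 1))⁻¹ *
    ∫ r in (0:ℝ)..1,
      r ^ ((q : ℝ) - (γ : ℝ) - 1) *
        ∫ v in (0:ℝ)..(1 / r),
          v ^ q * Real.exp (-(1 / 2) * u ^ 2 * κ * v ^ 2 * (1 - r ^ 2))

open Set Topology

/-!
The Klein model radius `R_K(x) = tanh (√(-K) x) / √(-K)` tends to `x`, and the normalising constant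
`C_K(d,m,u)` tends to `ω_{d-m} u^{d-m} / (d-m)`. Both follow by continuity at `s = √(-K) = 0` once
`sinh (s x)` is written as `s x` times the entire function `sinh y / y` evaluated at `y = s x`. The
double integral is continuous at `(0, u, δ)` as a function of the curvature and the two radii: apply
dominated convergence with a moving endpoint twice, the inner integrand being dominated by a
multiple of `z^q (1 - z²)^{(d-q)/2-1}`, because `(1 + K r² z²)^{-(d+1)/2}` is bounded while `K r²`
stays away from `-1`.
-/

section MovingEndpoint

lemma tendsto_indicator_Iic_apply {ι α E : Type*} [LinearOrder α] [TopologicalSpace α]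
    [OrderClosedTopology α] [TopologicalSpace E] [Zero E] {l : Filter ι} {c : ι → α}
    {F : ι → α → E} {f : α → E} {b x : α}
    (hc : Tendsto c l (𝓝 b)) (hx : x ≠ b) (hF : Tendsto (fun i => F i x) l (𝓝 (f x))) :
    Tendsto (fun i => (Iic (c i)).indicator (F i) x) l (𝓝 ((Iic b).indicator f x)) := by
  rcases lt_or_gt_of_ne hx with hlt | hgt
  · rw [indicator_of_mem (mem_Iic.2 hlt.le)]
    refine hF.congr' ?_
    filter_upwards [hc.eventually_const_lt hlt] with i hi
    rw [indicator_of_mem (mem_Iic.2 hi.le)]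
  · rw [indicator_of_notMem (notMem_Iic.2 hgt)]
    refine tendsto_const_nhds.congr' ?_
    filter_upwards [hc.eventually_lt_const hgt] with i hi
    rw [indicator_of_notMem (notMem_Iic.2 hi)]

variable {E : Type*} [NormedAddCommGroup E] [NormedSpace ℝ E]

lemma intervalIntegral_eq_setIntegral_indicator_Iic {μ : Measure ℝ} {a b B : ℝ}
    (hb : b ∈ Icc a B) (f : ℝ → E) :
    ∫ x in a..b, f x ∂μ = ∫ x in Ioc a B, (Iic b).indicator f x ∂μ := by
  rw [intervalIntegral.integral_of_le hb.1, setIntegral_indicator measurableSet_Iic,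
    Ioc_inter_Iic, min_eq_right hb.2]

lemma tendsto_intervalIntegral_of_dominated_of_tendsto_right {ι : Type*} {l : Filter ι}
    [l.IsCountablyGenerated] {c : ι → ℝ} {μ : Measure ℝ} [NullSingletonClass μ]
    {F : ι → ℝ → E} {f : ℝ → E} {bound : ℝ → ℝ} {a b B : ℝ}
    (hF_meas : ∀ᶠ i in l, AEStronglyMeasurable (F i) (μ.restrict (Ioc a B)))
    (hF_bound : ∀ᶠ i in l, ∀ᵐ x ∂μ.restrict (Ioc a B), ‖F i x‖ ≤ bound x)
    (hbound : IntegrableOn bound (Ioc a B) μ)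
    (hF_lim : ∀ᵐ x ∂μ.restrict (Ioc a B), Tendsto (fun i => F i x) l (𝓝 (f x)))
    (hc : Tendsto c l (𝓝 b)) (hc_mem : ∀ᶠ i in l, c i ∈ Icc a B) :
    Tendsto (fun i => ∫ x in a..c i, F i x ∂μ) l (𝓝 (∫ x in a..b, f x ∂μ)) := by
  rcases l.eq_or_neBot with rfl | _
  · exact tendsto_bot
  have hb : b ∈ Icc a B := isClosed_Icc.mem_of_tendsto hc hc_mem
  have integral_eq : (fun i => ∫ x in Ioc a B, (Iic (c i)).indicator (F i) x ∂μ)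
      =ᶠ[l] fun i => ∫ x in a..c i, F i x ∂μ := by
    filter_upwards [hc_mem] with i hi
    exact (intervalIntegral_eq_setIntegral_indicator_Iic hi (F i)).symm
  rw [intervalIntegral_eq_setIntegral_indicator_Iic hb]
  refine Tendsto.congr' integral_eq
    (tendsto_integral_filter_of_dominated_convergence bound ?_ ?_ hbound ?_)
  · filter_upwards [hF_meas] with i hi
    exact hi.indicator measurableSet_Iic
  · filter_upwards [hF_bound] with i hi
    filter_upwards [hi] with x hx
    exact (norm_indicator_le_norm_self _ _).trans hx
  · filter_upwards [hF_lim, ae_restrict_of_ae (Measure.ae_ne μ b)] with x hx hxb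
    exact tendsto_indicator_Iic_apply hc hxb hx

end MovingEndpoint

section Sinhc

/-- The entire function `sinh x / x`, with value `1` at `0`. Writing `sinh x = x * sinhc x` removes
the division by `√(-K)` from the hyperbolic quantities. -/
noncomputable def sinhc : ℝ → ℝ := dslope Real.sinh 0

lemma sinhc_zero : sinhc 0 = 1 := by
  simp [sinhc]

lemma sinh_eq_mul_sinhc (x : ℝ) : Real.sinh x = x * sinhc x := by
  simpa [sinhc] using (sub_smul_dslope Real.sinh 0 x).symm

lemma continuous_sinhc : Continuous sinhc :=
  continuousOn_univ.1 <| (continuousOn_dslope univ_mem).2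
    ⟨Real.continuous_sinh.continuousOn, Real.differentiable_sinh 0⟩

end Sinhc

section SmallCurvature

lemma tendsto_sqrt_neg_nhdsLT_zero : Tendsto (fun K : ℝ => √(-K)) (𝓝[<] 0) (𝓝 0) := by
  have hcont : Continuous fun K : ℝ => √(-K) := by fun_prop
  exact (hcont.tendsto' 0 0 (by simp)).mono_left nhdsWithin_le_nhds

lemma RK_eq_mul_sinhc_div_cosh {K : ℝ} (hK : K < 0) (x : ℝ) :
    RK K x = x * sinhc (√(-K) * x) / Real.cosh (√(-K) * x) := by
  have hs : √(-K) ≠ 0 := (Real.sqrt_pos.2 (neg_pos.2 hK)).ne'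
  rw [RK, add_comm, ← Real.cosh_sq, Real.sqrt_sq (Real.cosh_pos _).le, sinh_eq_mul_sinhc,
    mul_assoc, mul_div_mul_left _ _ hs]

lemma tendsto_RK (x : ℝ) : Tendsto (fun K => RK K x) (𝓝[<] 0) (𝓝 x) := by
  have hcont : Continuous fun s : ℝ => x * sinhc (s * x) / Real.cosh (s * x) := by
    have := continuous_sinhc
    fun_prop (disch := exact fun _ => (Real.cosh_pos _).ne')
  have hlim := (hcont.tendsto' 0 x (by simp [sinhc_zero])).comp tendsto_sqrt_neg_nhdsLT_zero
  refine hlim.congr' ?_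
  filter_upwards [self_mem_nhdsWithin] with K hK
  exact (RK_eq_mul_sinhc_div_cosh hK x).symm

lemma Cconst_eq_integral_sinhc {K : ℝ} (hK : K < 0) {d m : ℕ} (hm : m < d) (u : ℝ) :
    Cconst K d m u = omegaS (d - m) *
      ∫ r in (0 : ℝ)..u, Real.cosh (√(-K) * r) ^ m * (r * sinhc (√(-K) * r)) ^ (d - m - 1) := by
  obtain ⟨n, rfl⟩ : ∃ n, d = m + n + 1 := Nat.exists_eq_add_of_lt hm
  have hs : 0 < √(-K) := Real.sqrt_pos.2 (neg_pos.2 hK)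
  have hexp : -((m + n + 1 : ℕ) : ℝ) + m + 1 = -n := by push_cast; ring
  have hn : m + n + 1 - m - 1 = n := by lia
  rw [Cconst, hexp, hn, Real.rpow_neg hs.le, Real.rpow_natCast, mul_assoc,
    ← intervalIntegral.integral_const_mul]
  congr 1
  refine intervalIntegral.integral_congr fun r _ => ?_
  simp only [sinh_eq_mul_sinhc (√(-K) * r), mul_assoc, mul_pow]
  field_simp

lemma tendsto_Cconst {d m : ℕ} (hm : m < d) (u : ℝ) :
    Tendsto (fun K => Cconst K d m u) (𝓝[<] 0)
      (𝓝 (omegaS (d - m) * (u ^ (d - m) / (d - m : ℕ)))) := by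
  have hcont : Continuous fun s : ℝ => omegaS (d - m) *
      ∫ r in (0 : ℝ)..u, Real.cosh (s * r) ^ m * (r * sinhc (s * r)) ^ (d - m - 1) := by
    have := continuous_sinhc
    exact continuous_const.mul
      (intervalIntegral.continuous_parametric_intervalIntegral_of_continuous' (by fun_prop) 0 u)
  have hzero : ∫ r in (0 : ℝ)..u, Real.cosh (0 * r) ^ m * (r * sinhc (0 * r)) ^ (d - m - 1) =
      u ^ (d - m) / (d - m : ℕ) := by
    obtain ⟨n, rfl⟩ : ∃ n, d = m + n + 1 := Nat.exists_eq_add_of_lt hm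
    have hn : m + n + 1 - m = n + 1 := by lia
    simp [sinhc_zero, hn]
  rw [← hzero]
  refine ((hcont.tendsto 0).comp tendsto_sqrt_neg_nhdsLT_zero).congr' ?_
  filter_upwards [self_mem_nhdsWithin] with K hK
  exact (Cconst_eq_integral_sinhc hK hm u).symm

lemma omegaS_pos {n : ℕ} (hn : 0 < n) : 0 < omegaS n := by
  have : 0 < Real.Gamma ((n : ℝ) / 2) := Real.Gamma_pos_of_pos (by positivity)
  unfold omegaS
  positivity

end SmallCurvature

section DistanceIntegral

/-- The inner integral of `F_{K,u}` with a general weight `f` in place of `z^q (1 - z²)^a`. It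
depends on the curvature and on the radii only through `w = K r²` and `T = R / r`. -/
noncomputable def angularIntegral (f : ℝ → ℝ) (b w T : ℝ) : ℝ :=
  ∫ z in (0 : ℝ)..min 1 T, f z * (1 + w * z ^ 2) ^ b

/-- The double integral of `F_{K,u}(δ)` with general weights `h` and `f` and with independent
curvature `K` and Klein model radii `R` (for `u`) and `ρ` (for `δ`). -/
noncomputable def distanceIntegral (h f : ℝ → ℝ) (b K R ρ : ℝ) : ℝ :=
  ∫ r in (0 : ℝ)..ρ, h r * angularIntegral f b (K * r ^ 2) (R / r)

variable {f h : ℝ → ℝ} {w T : ℝ}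

lemma one_add_mul_sq_pos {z : ℝ} (hw : -1 < w) (hz : z ∈ Icc (0 : ℝ) 1) : 0 < 1 + w * z ^ 2 := by
  have hz_sq : z ^ 2 ≤ 1 := pow_le_one₀ hz.1 hz.2
  rcases le_or_gt 0 w with hw_nonneg | hw_neg
  · positivity
  · nlinarith

lemma exists_norm_one_add_mul_sq_rpow_le {α : ℝ} (hα : -1 < α) (β b : ℝ) :
    ∃ C, 0 ≤ C ∧ ∀ w ∈ Icc α β, ∀ z ∈ Icc (0 : ℝ) 1, ‖(1 + w * z ^ 2) ^ b‖ ≤ C := by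
  have hcont : ContinuousOn (fun p : ℝ × ℝ => (1 + p.1 * p.2 ^ 2) ^ b)
      (Icc α β ×ˢ Icc (0 : ℝ) 1) :=
    ContinuousOn.rpow_const (by fun_prop) fun p hp =>
      .inl (one_add_mul_sq_pos (hα.trans_le hp.1.1) hp.2).ne'
  obtain ⟨C, hC⟩ := (isCompact_Icc.prod isCompact_Icc).exists_bound_of_continuousOn hcont
  exact ⟨max C 0, le_max_right _ _, fun w hw z hz => (hC (w, z) ⟨hw, hz⟩).trans (le_max_left _ _)⟩

lemma continuousAt_angularIntegral (hf : IntervalIntegrable f volume 0 1) (b : ℝ) (hw : -1 < w)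
    (hT : 0 < T) : ContinuousAt (fun p : ℝ × ℝ => angularIntegral f b p.1 p.2) (w, T) := by
  obtain ⟨α, hα, hαw⟩ := exists_between hw
  obtain ⟨C, -, hC⟩ := exists_norm_one_add_mul_sq_rpow_le hα (w + 1) b
  have hf_on : IntegrableOn f (Ioc 0 1) :=
    (intervalIntegrable_iff_integrableOn_Ioc_of_le zero_le_one).1 hf
  refine tendsto_intervalIntegral_of_dominated_of_tendsto_right (B := 1)
    (bound := fun z => ‖f z‖ * C) ?_ ?_ (hf_on.norm.mul_const C) ?_ ?_ ?_
  · refine .of_forall fun p => hf_on.aestronglyMeasurable.mul ?_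
    exact Measurable.aestronglyMeasurable (by fun_prop)
  · have hw_near : ∀ᶠ p : ℝ × ℝ in 𝓝 (w, T), p.1 ∈ Icc α (w + 1) :=
      continuousAt_fst.eventually_mem (Icc_mem_nhds hαw (lt_add_one w))
    filter_upwards [hw_near] with p hp
    filter_upwards [ae_restrict_mem measurableSet_Ioc] with z hz
    rw [norm_mul]
    gcongr
    exact hC p.1 hp z (Ioc_subset_Icc_self hz)
  · filter_upwards [ae_restrict_mem measurableSet_Ioc] with z hz
    have hne : 1 + w * z ^ 2 ≠ 0 := (one_add_mul_sq_pos hw (Ioc_subset_Icc_self hz)).ne'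
    exact continuousAt_const.mul (ContinuousAt.rpow_const (by fun_prop) (.inl hne))
  · exact continuousAt_const.min continuousAt_snd
  · filter_upwards [continuousAt_snd.eventually_mem (Ioi_mem_nhds hT)] with p hp
    exact ⟨le_min zero_le_one (le_of_lt hp), min_le_left _ _⟩

lemma exists_norm_angularIntegral_le (hf : IntervalIntegrable f volume 0 1) {α : ℝ}
    (hα : -1 < α) (β b : ℝ) :
    ∃ M, ∀ w ∈ Icc α β, ∀ T, 0 ≤ T → ‖angularIntegral f b w T‖ ≤ M := by
  obtain ⟨C, hC0, hC⟩ := exists_norm_one_add_mul_sq_rpow_le hα β b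
  have hbound : IntervalIntegrable (fun z => ‖f z‖ * C) volume 0 1 := hf.norm.mul_const C
  refine ⟨∫ z in (0 : ℝ)..1, ‖f z‖ * C, fun w hw T hT => ?_⟩
  have hmin : 0 ≤ min 1 T := le_min zero_le_one hT
  calc ‖angularIntegral f b w T‖
      ≤ ∫ z in (0 : ℝ)..min 1 T, ‖f z‖ * C := by
        refine intervalIntegral.norm_integral_le_of_norm_le hmin (.of_forall fun z hz => ?_)
          (hbound.mono_set ?_)
        · rw [norm_mul]
          gcongr
          exact hC w hw z ⟨hz.1.le, hz.2.trans (min_le_left _ _)⟩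
        · rw [uIcc_of_le hmin, uIcc_of_le zero_le_one]
          exact Icc_subset_Icc_right (min_le_left _ _)
    _ ≤ ∫ z in (0 : ℝ)..1, ‖f z‖ * C :=
        intervalIntegral.integral_mono_interval le_rfl hmin (min_le_left _ _)
          (.of_forall fun z => by positivity) hbound

lemma continuousOn_angularIntegral_radius (hf : IntervalIntegrable f volume 0 1) (b : ℝ)
    {K R B : ℝ} (hK : ∀ r ∈ Ioc 0 B, -1 < K * r ^ 2) (hR : 0 < R) :
    ContinuousOn (fun r => angularIntegral f b (K * r ^ 2) (R / r)) (Ioc 0 B) := by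
  intro r hr
  have hpair : ContinuousAt (fun r => (K * r ^ 2, R / r)) r := by
    have := hr.1.ne'
    fun_prop (disch := assumption)
  exact ((continuousAt_angularIntegral hf b (hK r hr) (div_pos hR hr.1)).comp
    (f := fun r => (K * r ^ 2, R / r)) hpair).continuousWithinAt

lemma eventually_forall_mul_sq_mem_Icc (B : ℝ) {ε : ℝ} (hε : 0 < ε) :
    ∀ᶠ K : ℝ in 𝓝 0, ∀ r ∈ Ioc 0 B, K * r ^ 2 ∈ Icc (-ε) ε := by
  have hcont : Continuous fun K : ℝ => |K| * B ^ 2 := by fun_prop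
  filter_upwards [(hcont.tendsto' 0 0 (by simp)).eventually_lt_const hε] with K hK r hr
  refine abs_le.1 (le_trans ?_ hK.le)
  rw [abs_mul, abs_of_nonneg (sq_nonneg r)]
  gcongr
  exacts [hr.1.le, hr.2]

lemma continuousAt_distanceIntegral (hh : ∀ B, IntervalIntegrable h volume 0 B)
    (hf : IntervalIntegrable f volume 0 1) (b : ℝ) {u δ : ℝ} (hu : 0 < u) (hδ : 0 < δ) :
    ContinuousAt (fun p : ℝ × ℝ × ℝ => distanceIntegral h f b p.1 p.2.1 p.2.2) (0, u, δ) := by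
  have hK : Tendsto (fun p : ℝ × ℝ × ℝ => p.1) (𝓝 (0, u, δ)) (𝓝 0) := continuousAt_fst
  have hR : Tendsto (fun p : ℝ × ℝ × ℝ => p.2.1) (𝓝 (0, u, δ)) (𝓝 u) :=
    continuousAt_snd.fst
  have hρ : Tendsto (fun p : ℝ × ℝ × ℝ => p.2.2) (𝓝 (0, u, δ)) (𝓝 δ) :=
    continuousAt_snd.snd
  have hK_near := hK.eventually
    (eventually_forall_mul_sq_mem_Icc (δ + 1) (ε := 1 / 2) (by norm_num))
  have hR_pos := hR.eventually_const_lt hu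
  obtain ⟨M, hM⟩ := exists_norm_angularIntegral_le hf (α := -(1 / 2)) (by norm_num) (1 / 2) b
  have hh_on : IntegrableOn h (Ioc 0 (δ + 1)) :=
    (intervalIntegrable_iff_integrableOn_Ioc_of_le (by positivity)).1 (hh _)
  refine tendsto_intervalIntegral_of_dominated_of_tendsto_right (B := δ + 1)
    (bound := fun r => ‖h r‖ * M) ?_ ?_ (hh_on.norm.mul_const M) ?_ hρ ?_
  · filter_upwards [hK_near, hR_pos] with p hp hp_pos
    have hcont := continuousOn_angularIntegral_radius hf b
      (fun r hr => lt_of_lt_of_le (by norm_num) (hp r hr).1) hp_pos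
    exact hh_on.aestronglyMeasurable.mul (hcont.aestronglyMeasurable measurableSet_Ioc)
  · filter_upwards [hK_near, hR_pos] with p hp hp_pos
    filter_upwards [ae_restrict_mem measurableSet_Ioc] with r hr
    rw [norm_mul]
    gcongr
    exact hM _ (hp r hr) _ (div_nonneg hp_pos.le hr.1.le)
  · filter_upwards [ae_restrict_mem measurableSet_Ioc] with r hr
    have hangular := continuousAt_angularIntegral hf b (w := 0 * r ^ 2) (by simp)
      (div_pos hu hr.1)
    exact (hangular.tendsto.comp ((hK.mul_const _).prodMk_nhds (hR.div_const r))).const_mul (h r)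
  · exact hρ.eventually_mem (Icc_mem_nhds hδ (lt_add_one δ))

lemma distanceIntegral_zero (h f : ℝ → ℝ) (b R ρ : ℝ) :
    distanceIntegral h f b 0 R ρ = ∫ r in (0 : ℝ)..ρ, h r * ∫ z in (0 : ℝ)..min 1 (R / r), f z := by
  simp [distanceIntegral, angularIntegral]

end DistanceIntegral

lemma intervalIntegrable_pow_mul_one_sub_sq_rpow (q : ℕ) {a : ℝ} (ha : -1 < a) :
    IntervalIntegrable (fun z : ℝ => z ^ q * (1 - z ^ 2) ^ a) volume 0 1 := by
  have hsing : IntervalIntegrable (fun z : ℝ => (1 - z) ^ a) volume 0 1 := by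
    simpa using
      ((intervalIntegral.intervalIntegrable_rpow' (a := 0) (b := 1) ha).comp_sub_left 1).symm
  have hreg : ContinuousOn (fun z : ℝ => z ^ q * (1 + z) ^ a) (uIcc 0 1) := by
    refine ContinuousOn.mul (by fun_prop) (ContinuousOn.rpow_const (by fun_prop) fun z hz => ?_)
    rw [uIcc_of_le zero_le_one] at hz
    exact .inl (by linarith [hz.1])
  refine (hsing.mul_continuousOn hreg).congr fun z hz => ?_
  rw [uIoc_of_le zero_le_one] at hz
  have hfactor : (1 - z ^ 2) ^ a = (1 - z) ^ a * (1 + z) ^ a := by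
    rw [← Real.mul_rpow (by linarith [hz.2]) (by linarith [hz.1])]
    ring_nf
  simp only [hfactor]
  ring

lemma Fdist_eq_distanceIntegral (d q γ : ℕ) (K u δ : ℝ) :
    Fdist d q γ K u δ = Dconst d q γ * omegaS (d - γ) / Cconst K d (d - q + γ) u *
      distanceIntegral (fun r => r ^ ((q : ℝ) - γ - 1))
        (fun z => z ^ q * (1 - z ^ 2) ^ (((d : ℝ) - q) / 2 - 1)) (-((d : ℝ) + 1) / 2)
        K (RK K u) (RK K δ) :=
  rfl

/-- the hyperbolic distribution function of the distance converges pointwise,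
as the curvature tends to 0, to the Euclidean one. -/
theorem distribution_tendsto_euclidean (d q γ : ℕ) (hd : 2 ≤ d) (hq1 : 1 ≤ q)
    (hq2 : q ≤ d - 1) (hγ : γ ≤ q - 1) (u δ : ℝ) (hu : 0 < u) (hδ : 0 < δ) :
    Tendsto (fun K : ℝ => Fdist d q γ K u δ) (nhdsWithin 0 (Set.Iio 0))
      (nhds (Dconst d q γ * omegaS (d - γ) * ((q : ℝ) - (γ : ℝ)) /
          (omegaS (q - γ) * u ^ ((q : ℝ) - (γ : ℝ))) *
        ∫ r in (0:ℝ)..δ,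
          r ^ ((q : ℝ) - (γ : ℝ) - 1) *
            ∫ z in (0:ℝ)..(min 1 (u / r)),
              z ^ q * (1 - z ^ 2) ^ (((d : ℝ) - (q : ℝ)) / 2 - 1))) := by
  have hqd : (q : ℝ) < d := by exact_mod_cast (by lia : q < d)
  have hγq : (γ : ℝ) < q := by exact_mod_cast (by lia : γ < q)
  have hcodim : d - (d - q + γ) = q - γ := by lia
  have hC := tendsto_Cconst (d := d) (m := d - q + γ) (by lia) u
  rw [hcodim, ← Real.rpow_natCast, Nat.cast_sub (by exact_mod_cast hγq.le)] at hC
  have hC_ne : omegaS (q - γ) * (u ^ ((q : ℝ) - γ) / ((q : ℝ) - γ)) ≠ 0 :=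
    (mul_pos (omegaS_pos (by lia)) (div_pos (Real.rpow_pos_of_pos hu _) (sub_pos.2 hγq))).ne'
  have hradii : Tendsto (fun K => (K, RK K u, RK K δ)) (𝓝[<] 0) (𝓝 (0, u, δ)) :=
    (tendsto_id.mono_left nhdsWithin_le_nhds).prodMk_nhds
      ((tendsto_RK u).prodMk_nhds (tendsto_RK δ))
  have hI := (continuousAt_distanceIntegral
    (fun _ => intervalIntegral.intervalIntegrable_rpow' (r := (q : ℝ) - γ - 1) (by linarith))
    (intervalIntegrable_pow_mul_one_sub_sq_rpow q (a := ((d : ℝ) - q) / 2 - 1) (by linarith))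
    (-((d : ℝ) + 1) / 2) hu hδ).tendsto.comp hradii
  have hF := ((tendsto_const_nhds (x := Dconst d q γ * omegaS (d - γ))).div hC hC_ne).mul hI
  rw [distanceIntegral_zero, ← mul_div_assoc, div_div_eq_mul_div] at hF
  exact hF.congr fun K => (Fdist_eq_distanceIntegral d q γ K u δ).symm
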